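/- Set Π₀ = Π ∩ G₀ and K₀ = K ∩ G₀. Then G₀ is the union of exactly 6 pairwise disjoint double cosets Π₀γK₀ with γ ∈ G₀; of these 6 double cosets, exactly 3 are contained in the double coset ΠK of G, exactly 1 is contained in ΠbK, and exactly 2 are contained in Πb⁻¹K. -/

import Mathlib

/-!
Multiplication by `u`, `v` and `b` on the right cosets of `Π` is made explicit as an action of `G`
on 864 points `(e, x, a, d)`, standing for the cosets `Π bᵉ s jᵃ vᵈ` with `s` running over the six
cosets of `⟨j, v⟩` in `K`. That the defining relations hold on the points is a finite check; that
the stabilizer of the origin is not larger than `Π` is the content of a coset enumeration, run as an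
induction: multiplication by `b` is known at a few points from `a₁`, `a₂`, `a₃`, and the relations
`b³ = 1`, `(bj)² = v` and `(buv)³ = 1` propagate it to all others.

With `Π` a stabilizer, the double coset of `g` is read off from the point `origin · g`. Elements of
`G₀` commute with `v`, which forces `K ∩ G₀ = ⟨j, v⟩`, so `⟨j, v⟩`-orbits are given by `(e, x)` and
`K`-orbits by `e`. The orbit of the origin under `G₀` meets six pairs `(e, x)`, of which three have
`e = 0`, one has `e = 1` and two have `e = 2`.
-/

/-- Generators of the Cartwright–Steger lattice presentation. -/
inductive CSgen : Type
  | u : CSgen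
  | v : CSgen
  | b : CSgen

open FreeGroup in
/-- Relators of the Cartwright–Steger lattice:
`u³ = v⁴ = b³ = 1`, `(uv)² = (vu)²`, `vb = bv`, `(buv)³ = 1`, `(buvu)²v = 1`. -/
def csRels : Set (FreeGroup CSgen) :=
  { (of CSgen.u) ^ 3,
    (of CSgen.v) ^ 4,
    (of CSgen.b) ^ 3,
    (of CSgen.u * of CSgen.v) ^ 2 * ((of CSgen.v * of CSgen.u) ^ 2)⁻¹,
    of CSgen.v * of CSgen.b * (of CSgen.b * of CSgen.v)⁻¹,
    (of CSgen.b * of CSgen.u * of CSgen.v) ^ 3,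
    (of CSgen.b * of CSgen.u * of CSgen.v * of CSgen.u) ^ 2 * of CSgen.v }

/-- The Cartwright–Steger lattice, as an abstract presented group. -/
abbrev CS : Type := PresentedGroup csRels

def gu : CS := PresentedGroup.of CSgen.u
def gv : CS := PresentedGroup.of CSgen.v
def gb : CS := PresentedGroup.of CSgen.b
/-- `j = (uv)²`. -/
def gj : CS := (gu * gv) ^ 2

/-- `a₁ = vuv⁻¹j⁴buvj²`. -/
def a1 : CS := gv * gu * gv⁻¹ * gj ^ 4 * gb * gu * gv * gj ^ 2
/-- `a₂ = v²ubuv⁻¹uv²j`. -/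
def a2 : CS := gv ^ 2 * gu * gb * gu * gv⁻¹ * gu * gv ^ 2 * gj
/-- `a₃ = u⁻¹v²uj⁹bv⁻¹uv⁻¹j⁸`. -/
def a3 : CS := gu⁻¹ * gv ^ 2 * gu * gj ^ 9 * gb * gv⁻¹ * gu * gv⁻¹ * gj ^ 8

/-- The subgroup `Π` generated by `a₁`, `a₂`, `a₃`. -/
def PiGrp : Subgroup CS := Subgroup.closure {a1, a2, a3}

lemma a1_mem : a1 ∈ PiGrp := Subgroup.subset_closure (Set.mem_insert _ _)
lemma a2_mem : a2 ∈ PiGrp :=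
  Subgroup.subset_closure (Set.mem_insert_of_mem _ (Set.mem_insert _ _))
lemma a3_mem : a3 ∈ PiGrp :=
  Subgroup.subset_closure (Set.mem_insert_of_mem _ (Set.mem_insert_of_mem _ (Set.mem_singleton _)))

/-- The subgroup `K` generated by `u` and `v` (finite of order 288). -/
def Kgp : Subgroup CS := Subgroup.closure {gu, gv}

/-- The subgroup `G₀` generated by `(jb)⁻¹`, `b`, `j` and `v`
(the stabilizer of the mirror `M₀`). -/
def G0 : Subgroup CS := Subgroup.closure {(gj * gb)⁻¹, gb, gj, gv}

lemma G0_mem_s2 : (gj * gb)⁻¹ ∈ G0 := Subgroup.subset_closure (Set.mem_insert _ _)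
lemma G0_mem_b : gb ∈ G0 :=
  Subgroup.subset_closure (Set.mem_insert_of_mem _ (Set.mem_insert _ _))
lemma G0_mem_j : gj ∈ G0 :=
  Subgroup.subset_closure
    (Set.mem_insert_of_mem _ (Set.mem_insert_of_mem _ (Set.mem_insert _ _)))
lemma G0_mem_v : gv ∈ G0 :=
  Subgroup.subset_closure
    (Set.mem_insert_of_mem _ (Set.mem_insert_of_mem _
      (Set.mem_insert_of_mem _ (Set.mem_singleton _))))

/-- The double coset `HγK = {hγk : h ∈ H, k ∈ K}`. -/
def doset (γ : CS) (H K : Subgroup CS) : Set CS :=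
  {x | ∃ h ∈ H, ∃ k ∈ K, x = h * γ * k}

namespace CartwrightSteger

open scoped RightActions

section FinPowers

variable {G : Type*} {n : ℕ} {g : G}

lemma pow_val_add [Monoid G] (hg : g ^ n = 1) (a b : Fin n) :
    g ^ (↑(a + b) : ℕ) = g ^ (a : ℕ) * g ^ (b : ℕ) := by
  rw [Fin.val_add, ← pow_eq_pow_mod _ hg, pow_add]

variable [NeZero n]

lemma pow_val_neg [Group G] (hg : g ^ n = 1) (a : Fin n) :
    g ^ (↑(-a) : ℕ) = (g ^ (a : ℕ))⁻¹ := by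
  rw [eq_inv_iff_mul_eq_one, ← pow_val_add hg, neg_add_cancel, Fin.val_zero, pow_zero]

lemma pow_val_sub [Group G] (hg : g ^ n = 1) (a b : Fin n) :
    g ^ (↑(a - b) : ℕ) = g ^ (a : ℕ) * (g ^ (b : ℕ))⁻¹ := by
  rw [sub_eq_add_neg, pow_val_add hg, pow_val_neg hg]

end FinPowers

lemma natCard_mem_map_and {α β : Type*} [Fintype α] (f : α ↪ β) (P : β → Prop) :
    Nat.card {b // b ∈ Finset.univ.map f ∧ P b} = Nat.card {a // P (f a)} := by
  have h : {b | b ∈ Finset.univ.map f ∧ P b} = f '' {a | P (f a)} := by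
    ext b
    simp only [Finset.mem_map, Finset.mem_univ, true_and, Set.mem_ofPred_eq, Set.mem_image]
    grind
  exact (Nat.card_congr (Equiv.setCongr h)).trans (Nat.card_image_of_injective f.injective _)

section RightAction

variable {G X κ : Type*} [Group G] [MulAction Gᵐᵒᵖ X]

lemma op_smul_inv_eq_iff {x y : X} {g : G} : x <• g⁻¹ = y ↔ x = y <• g := by
  rw [MulOpposite.op_inv, inv_smul_eq_iff]

lemma apply_smul_eq_of_mem_closure {S : Set G} {f : X → κ}
    (hf : ∀ g ∈ S, ∀ x, f (x <• g) = f x) {g : G} (hg : g ∈ Subgroup.closure S) (x : X) :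
    f (x <• g) = f x := by
  induction hg using Subgroup.closure_induction generalizing x with
  | mem g hg => exact hf g hg x
  | one => rw [MulOpposite.op_one, one_smul]
  | mul g h _ _ ihg ihh => rw [op_smul_mul, ihh, ihg]
  | inv g _ ih => rw [← ih, op_smul_op_smul, inv_mul_cancel, MulOpposite.op_one, one_smul]

lemma mem_unop_stabilizer {x : X} {g : G} :
    g ∈ (MulAction.stabilizer Gᵐᵒᵖ x).unop ↔ x <• g = x := by
  rw [Subgroup.mem_unop, MulAction.mem_stabilizer_iff]

theorem mem_doubleCoset_stabilizer_inf_iff {x : X} {L M : Subgroup G} (hM : M ≤ L) {γ g : G}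
    (hγ : γ ∈ L) :
    g ∈ DoubleCoset.doubleCoset γ ((MulAction.stabilizer Gᵐᵒᵖ x).unop ⊓ L : Subgroup G) M ↔
      g ∈ L ∧ ∃ k ∈ M, x <• γ <• k = x <• g := by
  simp only [DoubleCoset.mem_doubleCoset, SetLike.mem_coe, Subgroup.mem_inf, mem_unop_stabilizer]
  constructor
  · rintro ⟨h, ⟨hx, hL⟩, k, hk, rfl⟩
    exact ⟨mul_mem (mul_mem hL hγ) (hM hk), k, hk, by rw [op_smul_mul, op_smul_mul, hx]⟩
  · rintro ⟨hg, k, hk, hx⟩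
    refine ⟨g * (γ * k)⁻¹, ⟨?_, mul_mem hg (inv_mem (mul_mem hγ (hM hk)))⟩, k, hk, by group⟩
    rw [op_smul_mul, op_smul_inv_eq_iff, op_smul_mul, hx]

/-- For `r : X → G` choosing a representative `r x` of a coset `H · r x` for each point `x`: the
translate of the coset of `x` by `g` is the coset of `x <• g`. -/
def CosetCompatible (H : Subgroup G) (r : X → G) (x : X) (g : G) : Prop :=
  r x * g * (r (x <• g))⁻¹ ∈ H

namespace CosetCompatible

variable {H : Subgroup G} {r : X → G} {x : X} {g h : G}

lemma one (H : Subgroup G) (r : X → G) (x : X) : CosetCompatible H r x 1 := by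
  simp [CosetCompatible, one_mem]

lemma mul (hg : CosetCompatible H r x g) (hh : CosetCompatible H r (x <• g) h) :
    CosetCompatible H r x (g * h) := by
  simpa [CosetCompatible, mul_assoc, mul_smul] using mul_mem hg hh

lemma of_mul_left (hgh : CosetCompatible H r x (g * h))
    (hh : CosetCompatible H r (x <• g) h) : CosetCompatible H r x g := by
  simpa [CosetCompatible, mul_assoc, mul_smul] using mul_mem hgh (inv_mem hh)

lemma of_mul_right (hgh : CosetCompatible H r x (g * h)) (hg : CosetCompatible H r x g) :
    CosetCompatible H r (x <• g) h := by
  simpa [CosetCompatible, mul_assoc, mul_smul] using mul_mem (inv_mem hg) hgh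

lemma of_sq (hg2 : CosetCompatible H r x (g ^ 2)) (hg : CosetCompatible H r (x <• g) g) :
    CosetCompatible H r x g :=
  of_mul_left (sq g ▸ hg2) hg

lemma of_pow_three (hg3 : g ^ 3 = 1) (hg : CosetCompatible H r (x <• g) g)
    (hg' : CosetCompatible H r (x <• g <• g) g) : CosetCompatible H r x g := by
  refine of_mul_left (h := g * g) ?_ (hg.mul hg')
  rw [← sq, ← pow_succ', hg3]
  exact one H r x

lemma of_commute (hgh : Commute g h) (hg : CosetCompatible H r x g) (hh : CosetCompatible H r x h)
    (hgh' : CosetCompatible H r (x <• g) h) : CosetCompatible H r (x <• h) g :=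
  of_mul_right (hgh.eq ▸ hg.mul hgh') hh

lemma of_mem_closure {S : Set G} (hS : ∀ g ∈ S, ∀ x, CosetCompatible H r x g)
    (hg : g ∈ Subgroup.closure S) (x : X) : CosetCompatible H r x g := by
  induction hg using Subgroup.closure_induction generalizing x with
  | mem g hg => exact hS g hg x
  | one => exact one H r x
  | mul g h _ _ ihg ihh => exact (ihg x).mul (ihh _)
  | inv g _ ih => exact of_mul_left (h := g) (by rw [inv_mul_cancel]; exact one H r x) (ih _)

lemma bot_iff : CosetCompatible ⊥ r x g ↔ r (x <• g) = r x * g := by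
  rw [CosetCompatible, Subgroup.mem_bot, mul_inv_eq_one, eq_comm]

lemma mono {H' : Subgroup G} (hH : H ≤ H') (hg : CosetCompatible H r x g) :
    CosetCompatible H' r x g :=
  hH hg

theorem eq_unop_stabilizer (hx : r x = 1) (hH : H ≤ (MulAction.stabilizer Gᵐᵒᵖ x).unop)
    (hr : ∀ g, CosetCompatible H r x g) : H = (MulAction.stabilizer Gᵐᵒᵖ x).unop := by
  refine le_antisymm hH fun g hg => ?_
  simpa [CosetCompatible, mem_unop_stabilizer.1 hg, hx] using hr g

end CosetCompatible

end RightAction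

/-! ### Relations in `K` -/

section Relations

open FreeGroup CSgen

lemma gu_pow_three : gu ^ 3 = 1 :=
  PresentedGroup.one_of_mem (x := of u ^ 3) (by simp [csRels])

lemma gv_pow_four : gv ^ 4 = 1 :=
  PresentedGroup.one_of_mem (x := of v ^ 4) (by simp [csRels])

lemma gb_pow_three : gb ^ 3 = 1 :=
  PresentedGroup.one_of_mem (x := of b ^ 3) (by simp [csRels])

lemma uv_sq_eq_vu_sq : (gu * gv) ^ 2 = (gv * gu) ^ 2 :=
  mul_inv_eq_one.1 <| PresentedGroup.one_of_mem
    (x := (of u * of v) ^ 2 * ((of v * of u) ^ 2)⁻¹) (by simp [csRels])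

lemma commute_gv_gb : Commute gv gb :=
  mul_inv_eq_one.1 <| PresentedGroup.one_of_mem
    (x := of v * of b * (of b * of v)⁻¹) (by simp [csRels])

lemma buv_pow_three : (gb * gu * gv) ^ 3 = 1 :=
  PresentedGroup.one_of_mem (x := (of b * of u * of v) ^ 3) (by simp [csRels])

lemma buvu_sq_mul_v : (gb * gu * gv * gu) ^ 2 * gv = 1 :=
  PresentedGroup.one_of_mem (x := (of b * of u * of v * of u) ^ 2 * of v) (by simp [csRels])

end Relations

lemma gj_eq_uvuv : gj = gu * gv * gu * gv := by rw [gj, sq, ← mul_assoc]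

lemma gj_eq_vuvu : gj = gv * gu * gv * gu := by rw [gj, uv_sq_eq_vu_sq, sq, ← mul_assoc]

lemma commute_gj_gu : Commute gj gu := by
  rw [commute_iff_eq]; nth_rewrite 1 [gj_eq_uvuv]; rw [gj_eq_vuvu]; group

lemma commute_gj_gv : Commute gj gv := by
  rw [commute_iff_eq]; nth_rewrite 1 [gj_eq_vuvu]; rw [gj_eq_uvuv]; group

lemma uvu_eq : gu * gv * gu = gv⁻¹ * gj := by rw [gj_eq_vuvu]; group

lemma bj_sq : (gb * gj) ^ 2 = gv := by
  have h : gb * (gu * gv * gu) * gb * (gu * gv * gu * gv) = 1 := by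
    rw [← buvu_sq_mul_v]; simp only [sq, mul_assoc]
  rw [← gj_eq_uvuv, uvu_eq, ← mul_assoc gb, ← commute_gv_gb.inv_left.eq] at h
  rw [sq, eq_comm, ← inv_mul_eq_one, ← h]; group

lemma uu_eq : gu * gu = gv * gu * gv * gj⁻¹ := by
  rw [gj_eq_uvuv, eq_mul_inv_iff_mul_eq]
  calc gu * gu * (gu * gv * gu * gv) = gu ^ 3 * (gv * gu * gv) := by
        simp only [pow_succ, pow_zero, one_mul, mul_assoc]
    _ = gv * gu * gv := by rw [gu_pow_three, one_mul]

lemma uvvu_eq : gu * gv ^ 2 * gu = gv⁻¹ * gu * gv⁻¹ * gj ^ 2 := by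
  have huv : gu * gv = gv⁻¹ * gu⁻¹ * gj := by rw [gj_eq_uvuv]; group
  have hvu : gv * gu = gj * gu⁻¹ * gv⁻¹ := by rw [gj_eq_vuvu]; group
  calc gu * gv ^ 2 * gu = gu * gv * (gv * gu) := by simp only [sq, mul_assoc]
    _ = gv⁻¹ * (gu ^ 2)⁻¹ * gj ^ 2 * gv⁻¹ := by
      rw [hvu, huv, sq, sq, mul_inv_rev]
      simp only [mul_assoc, commute_gj_gu.inv_right.left_comm]
    _ = gv⁻¹ * gu * gv⁻¹ * gj ^ 2 := by
      have hu : (gu ^ 2)⁻¹ = gu := by rw [inv_eq_iff_mul_eq_one, ← pow_succ, gu_pow_three]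
      rw [hu, mul_assoc _ (gj ^ 2), (commute_gj_gv.pow_left 2).inv_right.eq, ← mul_assoc]

lemma v_mul_uvvvu_mul_v : gv * (gu * gv ^ 3 * gu) * gv = gu * gv ^ 3 * gu * gj ^ 3 := by
  have huuj : gv * gu * gv = gu * gu * gj := by rw [uu_eq]; group
  have hv : gv ^ 3 = gv⁻¹ := by rw [eq_inv_iff_mul_eq_one, ← pow_succ, gv_pow_four]
  calc gv * (gu * gv ^ 3 * gu) * gv = gv * gu * gv * gv * (gv * gu * gv) := by
        simp only [pow_succ, pow_zero, one_mul, mul_assoc]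
    _ = gu * (gu * gv * gu) * gu * gj ^ 2 := by
      rw [huuj, sq]
      simp only [mul_assoc, commute_gj_gu.left_comm, commute_gj_gv.left_comm]
    _ = gu * gv ^ 3 * gu * gj ^ 3 := by
      rw [uvu_eq, hv, pow_succ' gj 2]
      simp only [mul_assoc, commute_gj_gu.left_comm]

lemma semiconjBy_uvvvu : SemiconjBy (gu * gv ^ 3 * gu) (gj ^ 3 * gv⁻¹) gv := by
  rw [SemiconjBy, ← mul_assoc, ← v_mul_uvvvu_mul_v, mul_inv_cancel_right]

lemma pow_mul_uvvvu_mul_pow (n : ℕ) :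
    gv ^ n * (gu * gv ^ 3 * gu) * gv ^ n = gu * gv ^ 3 * gu * gj ^ (3 * n) := by
  rw [← (semiconjBy_uvvvu.pow_right n).eq, (commute_gj_gv.pow_left 3).inv_right.mul_pow, inv_pow,
    ← pow_mul, ← mul_assoc, inv_mul_cancel_right]

lemma gj_pow_twelve : gj ^ 12 = 1 := by
  simpa [gv_pow_four] using pow_mul_uvvvu_mul_pow 4

lemma uvvvu_mul_u : gu * gv ^ 3 * gu * gu = gv * gu * gv ^ 2 * (gj ^ 2)⁻¹ := by
  calc gu * gv ^ 3 * gu * gu = gu * gv ^ 4 * gu * gv * gj⁻¹ := by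
        rw [mul_assoc, uu_eq, pow_succ gv 3]; simp only [mul_assoc]
    _ = gv * gu * (gv * gj⁻¹) * gv * gj⁻¹ := by
      rw [gv_pow_four, mul_one, uu_eq]; simp only [mul_assoc]
    _ = gv * gu * gv ^ 2 * (gj ^ 2)⁻¹ := by
      rw [sq, sq, mul_inv_rev]; simp only [mul_assoc, commute_gj_gv.inv_left.left_comm]

lemma uvvvu_mul_pow_mul_u (n : ℕ) :
    gu * gv ^ 3 * gu * gv ^ n * gu =
      (gv ^ n)⁻¹ * gv * gu * (gj ^ (3 * n) * (gj ^ 2)⁻¹) * gv ^ 2 := by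
  calc gu * gv ^ 3 * gu * gv ^ n * gu
      = (gv ^ n)⁻¹ * (gv ^ n * (gu * gv ^ 3 * gu) * gv ^ n) * gu := by group
    _ = (gv ^ n)⁻¹ * (gu * gv ^ 3 * gu * gu) * gj ^ (3 * n) := by
      rw [pow_mul_uvvvu_mul_pow]; simp only [mul_assoc, (commute_gj_gu.pow_left _).eq]
    _ = (gv ^ n)⁻¹ * gv * gu * (gv ^ 2 * ((gj ^ 2)⁻¹ * gj ^ (3 * n))) := by
      rw [uvvvu_mul_u]; simp only [mul_assoc]
    _ = (gv ^ n)⁻¹ * gv * gu * (gj ^ (3 * n) * (gj ^ 2)⁻¹) * gv ^ 2 := by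
      have hj : Commute (gj ^ (3 * n) * (gj ^ 2)⁻¹) (gv ^ 2) :=
        (commute_gj_gv.pow_pow _ _).mul_left (commute_gj_gv.pow_pow 2 2).inv_left
      rw [mul_assoc _ _ (gv ^ 2), hj.eq, ((Commute.refl gj).pow_pow 2 _).inv_left.eq]

/-! ### The action on the cosets of `Π` -/

/-- The vertices of an octahedron on which `K / ⟨j⟩ ≅ S₄` acts by rotations; `v` fixes `north` and
`south` and turns the equator. They index the cosets `k⟨j, v⟩` in `K`. -/
inductive Vertex
  | north
  | equator (m : Fin 4)
  | south
  deriving DecidableEq, Fintype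

open Vertex

/-- A representative of the coset of `⟨j, v⟩` in `K` given by a vertex. -/
def vertexRep : Vertex → CS
  | north => 1
  | equator m => gv ^ (m : ℕ) * gu
  | south => gu * gv ^ 3 * gu

/-- The triple `(x', c, f)` with `vertexRep x * vᵈ * u = vertexRep x' * jᶜ * vᶠ`. -/
def uVertex : Vertex → Fin 4 → Vertex × Fin 12 × Fin 4
  | north, d => (equator d, 0, 0)
  | equator m, 0 => (equator (m + 1), -1, 1)
  | equator m, 1 => (north, 1, m - 1)
  | equator m, 2 => (equator (m - 1), 2, -1)
  | equator m, 3 => (south, ⟨3 * m, by omega⟩, -m)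
  | south, d => (equator (1 - d), ⟨3 * d, by omega⟩ - 2, 2)

lemma vertexRep_mul_pow_mul_u (x : Vertex) (d : Fin 4) :
    vertexRep x * gv ^ (d : ℕ) * gu =
      vertexRep (uVertex x d).1 * gj ^ (uVertex x d).2.1.val * gv ^ (uVertex x d).2.2.val := by
  have hv := gv_pow_four
  have hj := gj_pow_twelve
  match x, d with
  | north, d => simp [vertexRep, uVertex]
  | equator m, 0 =>
    simp only [vertexRep, uVertex, pow_val_neg hj, pow_val_add hv, Fin.val_zero, Fin.val_one,
      pow_zero, pow_one, mul_one]
    rw [mul_assoc, uu_eq, mul_assoc _ gv, ← commute_gj_gv.inv_left.eq]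
    simp only [mul_assoc]
  | equator m, 1 =>
    simp only [vertexRep, uVertex, pow_val_sub hv, Fin.val_one, pow_one, one_mul]
    rw [mul_assoc, mul_assoc, ← mul_assoc gu, uvu_eq, ← mul_assoc]
    exact (((commute_gj_gv.pow_right m).mul_right commute_gj_gv.inv_right).eq).symm
  | equator m, 2 =>
    simp only [vertexRep, uVertex, pow_val_neg hv, pow_val_sub hv, Fin.val_two, Fin.val_one,
      pow_one]
    rw [mul_assoc, mul_assoc, ← mul_assoc gu, uvvu_eq, mul_assoc _ gv⁻¹,
      ← (commute_gj_gv.pow_left 2).inv_right.eq]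
    simp only [mul_assoc]
  | equator m, 3 =>
    simp only [vertexRep, uVertex, pow_val_neg hv]
    rw [← pow_mul_uvvvu_mul_pow, mul_inv_cancel_right]
    simp only [mul_assoc]
    rfl
  | south, d =>
    simp only [vertexRep, uVertex, pow_val_sub hv, pow_val_sub hj, Fin.val_two, Fin.val_one,
      pow_one]
    rw [uvvvu_mul_pow_mul_u, ((Commute.refl gv).pow_left d).inv_left.eq]

/-- A right coset of `Π`, in the coordinates of `Point.rep`. -/
structure Point where
  sheet : Fin 3
  vertex : Vertex
  jExp : Fin 12
  vExp : Fin 4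
  deriving DecidableEq, Fintype

namespace Point

/-- The factor from `K` of the representative of a coset of `Π`. -/
def kRep (p : Point) : CS := vertexRep p.vertex * gj ^ p.jExp.val * gv ^ p.vExp.val

/-- The representative `bᵉ s jᵃ vᵈ` of a coset of `Π`, where `s` represents a vertex. -/
def rep (p : Point) : CS := gb ^ p.sheet.val * p.kRep

/-- The coset `Π`. -/
def origin : Point := ⟨0, north, 0, 0⟩

end Point

/-- Right multiplication by `u` on the cosets of `Π`. -/
def uMap (p : Point) : Point :=
  ⟨p.sheet, (uVertex p.vertex p.vExp).1, p.jExp + (uVertex p.vertex p.vExp).2.1,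
    (uVertex p.vertex p.vExp).2.2⟩

/-- Right multiplication by `v` on the cosets of `Π`. -/
def vMap (p : Point) : Point := { p with vExp := p.vExp + 1 }

/-- The coset `Π bᵉ s jᵃ b` for `a < 4`, read off from a coset enumeration of `Π` in `G`. -/
def bTable : Fin 3 → Vertex → Fin 4 → Point
  | 0, .north => ![⟨1, .north, 0, 0⟩, ⟨2, .north, 11, 1⟩,
      ⟨0, .equator 1, 5, 0⟩, ⟨2, .south, 0, 3⟩]
  | 0, .equator 0 => ![⟨1, .north, 2, 1⟩, ⟨2, .south, 6, 3⟩,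
      ⟨0, .equator 1, 7, 3⟩, ⟨2, .north, 9, 3⟩]
  | 0, .equator 1 => ![⟨0, .equator 0, 5, 2⟩, ⟨2, .south, 9, 2⟩,
      ⟨0, .north, 9, 1⟩, ⟨2, .north, 6, 3⟩]
  | 0, .equator 2 => ![⟨0, .south, 6, 2⟩, ⟨2, .equator 2, 11, 2⟩,
      ⟨2, .equator 3, 0, 1⟩, ⟨1, .south, 4, 2⟩]
  | 0, .equator 3 => ![⟨1, .equator 1, 3, 2⟩, ⟨1, .equator 0, 10, 0⟩,
      ⟨1, .equator 3, 2, 3⟩, ⟨1, .equator 2, 3, 3⟩]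
  | 0, .south => ![⟨1, .south, 3, 2⟩, ⟨2, .equator 1, 7, 0⟩,
      ⟨2, .equator 2, 8, 3⟩, ⟨0, .equator 2, 7, 3⟩]
  | 1, .north => ![⟨2, .north, 0, 0⟩, ⟨0, .north, 11, 1⟩,
      ⟨2, .south, 7, 1⟩, ⟨0, .equator 0, 11, 0⟩]
  | 1, .equator 0 => ![⟨1, .equator 1, 2, 0⟩, ⟨2, .equator 0, 1, 1⟩,
      ⟨1, .equator 3, 7, 2⟩, ⟨0, .equator 3, 4, 1⟩]
  | 1, .equator 1 => ![⟨0, .equator 3, 7, 3⟩, ⟨1, .equator 2, 6, 3⟩,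
      ⟨2, .equator 0, 2, 0⟩, ⟨1, .equator 0, 11, 1⟩]
  | 1, .equator 2 => ![⟨0, .equator 3, 10, 2⟩, ⟨1, .equator 3, 9, 2⟩,
      ⟨2, .equator 0, 11, 0⟩, ⟨1, .equator 1, 8, 2⟩]
  | 1, .equator 3 => ![⟨1, .equator 0, 5, 3⟩, ⟨2, .equator 0, 4, 1⟩,
      ⟨1, .equator 2, 4, 3⟩, ⟨0, .equator 3, 1, 2⟩]
  | 1, .south => ![⟨0, .south, 7, 3⟩, ⟨0, .equator 2, 10, 3⟩,
      ⟨2, .equator 3, 7, 1⟩, ⟨2, .equator 1, 8, 1⟩]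
  | 2, .north => ![⟨0, .north, 0, 0⟩, ⟨1, .north, 11, 1⟩,
      ⟨0, .equator 0, 6, 2⟩, ⟨0, .equator 1, 10, 2⟩]
  | 2, .equator 0 => ![⟨1, .equator 2, 1, 1⟩, ⟨1, .equator 3, 8, 0⟩,
      ⟨1, .equator 0, 0, 0⟩, ⟨1, .equator 1, 1, 1⟩]
  | 2, .equator 1 => ![⟨0, .south, 4, 1⟩, ⟨1, .south, 6, 0⟩,
      ⟨2, .equator 3, 10, 2⟩, ⟨2, .equator 2, 5, 2⟩]
  | 2, .equator 2 => ![⟨0, .equator 2, 0, 3⟩, ⟨0, .south, 5, 2⟩,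
      ⟨2, .equator 1, 10, 3⟩, ⟨2, .equator 3, 5, 2⟩]
  | 2, .equator 3 => ![⟨1, .south, 5, 0⟩, ⟨0, .equator 2, 1, 0⟩,
      ⟨2, .equator 2, 10, 3⟩, ⟨2, .equator 1, 5, 3⟩]
  | 2, .south => ![⟨1, .north, 5, 0⟩, ⟨0, .north, 2, 2⟩,
      ⟨0, .equator 1, 4, 3⟩, ⟨0, .equator 0, 8, 2⟩]

/-- Right multiplication by `b` on the cosets of `Π`. As `j⁴` normalizes `Π` and left
multiplication by it adds `4` to `jExp`, the entries with `jExp < 4` determine the others. -/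
def bMap (p : Point) : Point :=
  let q := bTable p.sheet p.vertex (Fin.ofNat 4 p.jExp)
  { q with jExp := q.jExp + 4 * Fin.ofNat 12 (p.jExp / 4), vExp := q.vExp + p.vExp }

lemma uMap_uMap_uMap : ∀ p, uMap (uMap (uMap p)) = p := by decide +kernel

lemma bMap_bMap_bMap : ∀ p, bMap (bMap (bMap p)) = p := by decide +kernel

lemma vMap_uMap_vMap_uMap :
    ∀ p, vMap (uMap (vMap (uMap p))) = { p with jExp := p.jExp + 1 } := by
  decide +kernel

lemma uMap_vMap_uMap_vMap :
    ∀ p, uMap (vMap (uMap (vMap p))) = { p with jExp := p.jExp + 1 } := by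
  decide +kernel

lemma bMap_vMap (p : Point) : bMap (vMap p) = vMap (bMap p) := by
  simp only [bMap, vMap, add_assoc]

lemma buv_cube_apply :
    ∀ p, vMap (uMap (bMap (vMap (uMap (bMap (vMap (uMap (bMap p)))))))) = p := by
  decide +kernel

lemma buvu_sq_v_apply :
    ∀ p, vMap (uMap (vMap (uMap (bMap (uMap (vMap (uMap (bMap p)))))))) = p := by
  decide +kernel

/-- The permutation of the points by which a generator of `G` acts from the right; it lives in the
opposite group because the action is on the right. -/
def genPerm : CSgen → (Equiv.Perm Point)ᵐᵒᵖ
  | .u => .op ⟨uMap, fun p => uMap (uMap p), uMap_uMap_uMap, uMap_uMap_uMap⟩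
  | .v => .op ⟨vMap, fun p => { p with vExp := p.vExp - 1 }, fun p => by simp [vMap],
      fun p => by simp [vMap]⟩
  | .b => .op ⟨bMap, fun p => bMap (bMap p), bMap_bMap_bMap, bMap_bMap_bMap⟩

lemma lift_genPerm_eq_one : ∀ r ∈ csRels, FreeGroup.lift genPerm r = 1 := by
  rintro r (rfl | rfl | rfl | rfl | rfl | rfl | rfl) <;>
    simp only [map_mul, map_inv, map_pow, FreeGroup.lift_apply_of, mul_inv_eq_one] <;>
    refine MulOpposite.unop_injective (Equiv.ext fun p => ?_)
  · exact uMap_uMap_uMap p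
  · simp [pow_succ, genPerm, vMap, add_assoc]
  · exact bMap_bMap_bMap p
  · exact (vMap_uMap_vMap_uMap p).trans (uMap_vMap_uMap_vMap p).symm
  · exact bMap_vMap p
  · exact buv_cube_apply p
  · exact buvu_sq_v_apply p

/-- The right action of `G` on the points, as a homomorphism. -/
def actHom : CS →* (Equiv.Perm Point)ᵐᵒᵖ := PresentedGroup.toGroup lift_genPerm_eq_one

instance : MulAction CSᵐᵒᵖ Point where
  smul g p := (actHom g.unop).unop p
  one_smul p := congrArg (fun f => f.unop p) (map_one actHom)
  mul_smul g h p := congrArg (fun f => f.unop p) (map_mul actHom h.unop g.unop)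

lemma smul_of (p : Point) (c : CSgen) :
    p <• (PresentedGroup.of c : CS) = (genPerm c).unop p :=
  congrArg (fun f : (Equiv.Perm Point)ᵐᵒᵖ => f.unop p)
    (PresentedGroup.toGroup.of lift_genPerm_eq_one)

lemma smul_gu (p : Point) : p <• gu = uMap p := smul_of p .u

lemma smul_gv (p : Point) : p <• gv = vMap p := smul_of p .v

lemma smul_gb (p : Point) : p <• gb = bMap p := smul_of p .b

lemma smul_gj (p : Point) : p <• gj = { p with jExp := p.jExp + 1 } := by
  rw [gj_eq_uvuv, op_smul_mul, op_smul_mul, op_smul_mul, smul_gu, smul_gv, smul_gu, smul_gv,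
    vMap_uMap_vMap_uMap]

lemma smul_gu_inv (p : Point) : p <• gu⁻¹ = uMap (uMap p) := by
  rw [op_smul_inv_eq_iff, smul_gu, uMap_uMap_uMap]

lemma smul_gv_inv (p : Point) : p <• gv⁻¹ = { p with vExp := p.vExp - 1 } := by
  rw [op_smul_inv_eq_iff, smul_gv, vMap, sub_add_cancel]

lemma smul_gb_inv (p : Point) : p <• gb⁻¹ = bMap (bMap p) := by
  rw [op_smul_inv_eq_iff, smul_gb, bMap_bMap_bMap]

lemma smul_gv_pow (p : Point) (n : ℕ) :
    p <• gv ^ n = { p with vExp := p.vExp + Fin.ofNat 4 n } := by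
  induction n with
  | zero => simp
  | succ n ih =>
    rw [pow_succ, op_smul_mul, ih, smul_gv, vMap, add_assoc]
    congr 2
    ext; simp [Fin.val_add]

lemma smul_gj_pow (p : Point) (n : ℕ) :
    p <• gj ^ n = { p with jExp := p.jExp + Fin.ofNat 12 n } := by
  induction n with
  | zero => simp
  | succ n ih =>
    rw [pow_succ, op_smul_mul, ih, smul_gj, add_assoc]
    congr 2
    ext; simp [Fin.val_add]

lemma gu_mem_Kgp : gu ∈ Kgp := Subgroup.subset_closure (.inl rfl)

lemma gv_mem_Kgp : gv ∈ Kgp := Subgroup.subset_closure (.inr rfl)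

lemma gj_mem_Kgp : gj ∈ Kgp := pow_mem (mul_mem gu_mem_Kgp gv_mem_Kgp) 2

lemma vertexRep_mem_Kgp (x : Vertex) : vertexRep x ∈ Kgp := by
  have hu := gu_mem_Kgp
  have hv := fun n => pow_mem gv_mem_Kgp n
  cases x with
  | north => exact one_mem _
  | equator m => exact mul_mem (hv m) hu
  | south => exact mul_mem (mul_mem hu (hv 3)) hu

namespace Point

lemma kRep_mem_Kgp (p : Point) : p.kRep ∈ Kgp :=
  mul_mem (mul_mem (vertexRep_mem_Kgp _) (pow_mem gj_mem_Kgp _)) (pow_mem gv_mem_Kgp _)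

lemma kRep_uMap (p : Point) : (uMap p).kRep = p.kRep * gu := by
  obtain ⟨e, x, a, d⟩ := p
  have hjv (m n : ℕ) : Commute (gj ^ m) (gv ^ n) := commute_gj_gv.pow_pow m n
  calc (uMap ⟨e, x, a, d⟩).kRep
      = vertexRep (uVertex x d).1 * gj ^ (uVertex x d).2.1.val * gv ^ (uVertex x d).2.2.val *
          gj ^ a.val := by
        simp only [kRep, uMap, pow_val_add gj_pow_twelve, ((Commute.refl gj).pow_pow a.val _).eq,
          mul_assoc, (hjv a _).eq]
    _ = vertexRep x * gj ^ a.val * gv ^ d.val * gu := by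
      rw [← vertexRep_mul_pow_mul_u]
      simp only [mul_assoc, (hjv _ _).left_comm, (commute_gj_gu.pow_left _).eq]

lemma kRep_vMap (p : Point) : (vMap p).kRep = p.kRep * gv := by
  simp only [kRep, vMap, pow_val_add gv_pow_four, Fin.val_one, pow_one, mul_assoc]

lemma rep_smul_of_mem_Kgp {k : CS} (hk : k ∈ Kgp) (p : Point) : (p <• k).rep = p.rep * k := by
  rw [← CosetCompatible.bot_iff]
  refine CosetCompatible.of_mem_closure ?_ hk p
  rintro k (rfl | rfl) p <;> rw [CosetCompatible.bot_iff]
  · rw [smul_gu, rep, kRep_uMap, rep, mul_assoc, uMap]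
  · rw [smul_gv, rep, kRep_vMap, rep, mul_assoc, vMap]

lemma sheet_smul_of_mem_Kgp {k : CS} (hk : k ∈ Kgp) (p : Point) : (p <• k).sheet = p.sheet := by
  refine apply_smul_eq_of_mem_closure ?_ hk p
  rintro k (rfl | rfl) p
  · rw [smul_gu, uMap]
  · rw [smul_gv, vMap]

lemma rep_origin : origin.rep = 1 := by simp [origin, rep, kRep, vertexRep]

lemma mk_smul_kRep (p : Point) : mk p.sheet north 0 0 <• p.kRep = p := by
  obtain ⟨e, x, a, d⟩ := p
  have hx : mk e north 0 0 <• vertexRep x = ⟨e, x, 0, 0⟩ := by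
    cases x with
    | north => simp [vertexRep]
    | equator m =>
      simp only [vertexRep, op_smul_mul, smul_gv_pow, smul_gu, uMap, uVertex, Fin.ofNat_val_eq_self,
        zero_add]
    | south => simp only [vertexRep, op_smul_mul, smul_gv_pow, smul_gu, uMap, uVertex]; rfl
  rw [kRep, op_smul_mul, op_smul_mul, hx, smul_gj_pow, smul_gv_pow]
  simp

lemma exists_mem_Kgp_smul_eq_iff {p q : Point} :
    (∃ k ∈ Kgp, p <• k = q) ↔ p.sheet = q.sheet := by
  constructor
  · rintro ⟨k, hk, rfl⟩
    rw [sheet_smul_of_mem_Kgp hk]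
  · intro h
    refine ⟨p.kRep⁻¹ * q.kRep, mul_mem (inv_mem p.kRep_mem_Kgp) q.kRep_mem_Kgp, ?_⟩
    rw [op_smul_mul, op_smul_inv_eq_iff.2 (p.mk_smul_kRep).symm, h, mk_smul_kRep]

end Point

/-! ### The stabilizer of the origin -/

section Stabilizer

open Point

lemma PiGrp_le_stabilizer_origin : PiGrp ≤ (MulAction.stabilizer CSᵐᵒᵖ origin).unop := by
  refine (Subgroup.closure_le _).2 ?_
  rintro g (rfl | rfl | rfl) <;> refine mem_unop_stabilizer.2 ?_
  · simp only [a1, op_smul_mul, smul_gu, smul_gv, smul_gb, smul_gv_inv, smul_gj_pow]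
    decide
  · simp only [a2, op_smul_mul, smul_gu, smul_gv_pow, smul_gb, smul_gv_inv, smul_gj]
    decide
  · simp only [a3, op_smul_mul, smul_gu, smul_gv_pow, smul_gb, smul_gu_inv, smul_gv_inv,
      smul_gj_pow]
    decide

lemma cosetCompatible_of_mem_Kgp {k : CS} (hk : k ∈ Kgp) (p : Point) :
    CosetCompatible PiGrp rep p k :=
  (CosetCompatible.bot_iff.2 (rep_smul_of_mem_Kgp hk p)).mono bot_le

lemma cosetCompatible_mul_iff {k : CS} (hk : k ∈ Kgp) {p : Point} {g : CS} :
    CosetCompatible PiGrp rep p (g * k) ↔ CosetCompatible PiGrp rep p g :=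
  ⟨fun h => h.of_mul_left (cosetCompatible_of_mem_Kgp hk _),
    fun h => h.mul (cosetCompatible_of_mem_Kgp hk _)⟩

lemma cosetCompatible_gb_of_mul_mem {k k' : CS} {p : Point} (hk : k ∈ Kgp) (hk' : k' ∈ Kgp)
    (hp : origin <• k = p) (h : k * gb * k' ∈ PiGrp) : CosetCompatible PiGrp rep p gb := by
  have h_fixed := mem_unop_stabilizer.1 (PiGrp_le_stabilizer_origin h)
  have h_origin : CosetCompatible PiGrp rep origin (k * gb * k') := by
    rwa [CosetCompatible, h_fixed, rep_origin, one_mul, inv_one, mul_one]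
  rw [← hp]
  exact ((cosetCompatible_mul_iff hk').1 h_origin).of_mul_right (cosetCompatible_of_mem_Kgp hk _)

lemma cosetCompatible_gb_smul_gv_pow {p : Point} (h : CosetCompatible PiGrp rep p gb) (n : ℕ) :
    CosetCompatible PiGrp rep (p <• gv ^ n) gb :=
  .of_commute (commute_gv_gb.pow_left n).symm h
    (cosetCompatible_of_mem_Kgp (pow_mem gv_mem_Kgp n) _)
    (cosetCompatible_of_mem_Kgp (pow_mem gv_mem_Kgp n) _)

lemma cosetCompatible_gb_of_rep_eq {p : Point} (h : (bMap p).rep = p.rep * gb) :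
    CosetCompatible PiGrp rep p gb :=
  (CosetCompatible.bot_iff.2 (by rwa [smul_gb])).mono bot_le

lemma cosetCompatible_gb_of_a1 : CosetCompatible PiGrp rep ⟨0, equator 1, 4, 3⟩ gb := by
  have hu := gu_mem_Kgp
  have hv := gv_mem_Kgp
  have hj (n : ℕ) := pow_mem gj_mem_Kgp n
  refine cosetCompatible_gb_of_mul_mem (k := gv * gu * gv⁻¹ * gj ^ 4) (k' := gu * gv * gj ^ 2)
    (mul_mem (mul_mem (mul_mem hv hu) (inv_mem hv)) (hj 4)) (mul_mem (mul_mem hu hv) (hj 2)) ?_ ?_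
  · simp only [op_smul_mul, smul_gu, smul_gv, smul_gv_inv, smul_gj_pow]
    decide
  · simpa only [a1, mul_assoc] using a1_mem

lemma cosetCompatible_gb_of_a2 : CosetCompatible PiGrp rep ⟨0, equator 2, 0, 0⟩ gb := by
  have hu := gu_mem_Kgp
  have hv := gv_mem_Kgp
  have hv2 := pow_mem hv 2
  refine cosetCompatible_gb_of_mul_mem (k := gv ^ 2 * gu) (k' := gu * gv⁻¹ * gu * gv ^ 2 * gj)
    (mul_mem hv2 hu) (mul_mem (mul_mem (mul_mem (mul_mem hu (inv_mem hv)) hu) hv2) gj_mem_Kgp) ?_ ?_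
  · simp only [op_smul_mul, smul_gu, smul_gv_pow]
    decide
  · simpa only [a2, mul_assoc] using a2_mem

lemma cosetCompatible_gb_of_a3 : CosetCompatible PiGrp rep ⟨0, south, 11, 3⟩ gb := by
  have hu := gu_mem_Kgp
  have hv := gv_mem_Kgp
  have hj (n : ℕ) := pow_mem gj_mem_Kgp n
  refine cosetCompatible_gb_of_mul_mem (k := gu⁻¹ * gv ^ 2 * gu * gj ^ 9)
    (k' := gv⁻¹ * gu * gv⁻¹ * gj ^ 8)
    (mul_mem (mul_mem (mul_mem (inv_mem hu) (pow_mem hv 2)) hu) (hj 9))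
    (mul_mem (mul_mem (mul_mem (inv_mem hv) hu) (inv_mem hv)) (hj 8)) ?_ ?_
  · simp only [op_smul_mul, smul_gu, smul_gu_inv, smul_gv_pow, smul_gj_pow]
    decide
  · simpa only [a3, mul_assoc] using a3_mem

/-- The points at which multiplication by `b` is compatible with representatives because the
representatives are chosen so, or because of one of the generators of `Π`. -/
def seeds : List Point :=
  [⟨0, north, 0, 0⟩, ⟨1, north, 0, 0⟩, ⟨0, equator 1, 4, 3⟩, ⟨0, equator 2, 0, 0⟩,
    ⟨0, south, 11, 3⟩]

/-- The round of the coset enumeration of `Π` in which multiplication of a coset by `b` is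
determined. -/
def rank (p : Point) : ℕ :=
  rankTable p.sheet p.vertex p.jExp
where
  /-- The rank of the cosets `Π bᵉ s jᵃ vᵈ`, which does not depend on `d`. -/
  rankTable : Fin 3 → Vertex → Fin 12 → ℕ
    | 0, .north => ![0, 2, 16, 16, 14, 8, 17, 17, 17, 14, 1, 15]
    | 0, .equator 0 => ![15, 17, 17, 18, 16, 12, 17, 5, 5, 16, 1, 12]
    | 0, .equator 1 => ![17, 15, 2, 12, 0, 17, 16, 17, 17, 4, 17, 17]
    | 0, .equator 2 => ![0, 2, 15, 5, 1, 8, 17, 17, 18, 17, 17, 17]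
    | 0, .equator 3 => ![12, 15, 16, 14, 17, 18, 18, 17, 16, 14, 3, 3]
    | 0, .south => ![7, 17, 18, 18, 5, 17, 4, 1, 17, 6, 10, 0]
    | 1, .north => ![0, 1, 15, 15, 13, 13, 16, 15, 18, 18, 15, 4]
    | 1, .equator 0 => ![16, 15, 16, 17, 16, 8, 15, 15, 17, 15, 16, 14]
    | 1, .equator 1 => ![16, 17, 15, 15, 13, 15, 16, 16, 16, 16, 16, 17]
    | 1, .equator 2 => ![2, 5, 14, 17, 15, 16, 17, 18, 16, 18, 16, 14]
    | 1, .equator 3 => ![14, 14, 15, 15, 17, 18, 18, 18, 16, 16, 4, 4]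
    | 1, .south => ![16, 17, 17, 17, 6, 4, 13, 15, 6, 17, 16, 16]
    | 2, .north => ![1, 1, 5, 16, 7, 14, 11, 13, 15, 18, 17, 17]
    | 2, .equator 0 => ![15, 17, 16, 16, 17, 13, 7, 16, 17, 18, 14, 15]
    | 2, .equator 1 => ![16, 14, 5, 12, 7, 15, 11, 17, 18, 18, 15, 17]
    | 2, .equator 2 => ![3, 5, 16, 16, 9, 11, 13, 15, 17, 18, 18, 16]
    | 2, .equator 3 => ![14, 15, 17, 10, 15, 17, 15, 16, 18, 17, 14, 4]
    | 2, .south => ![17, 17, 16, 16, 16, 17, 5, 16, 14, 16, 16, 13]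

-- After the seeds come the ways to deduce `q <• gb` from points of smaller rank by `(bj)² = v`,
-- `b³ = 1` and `(buv)³ = 1`.
lemma exists_mem_seeds_or_rank_lt : ∀ p : Point, ∃ d : Fin 4, ∃ q, q = { p with vExp := d } ∧
    (q ∈ seeds ∨
      rank { bMap q with jExp := (bMap q).jExp + 1 } < rank p ∨
      rank (bMap q) < rank p ∧ rank (bMap (bMap q)) < rank p ∨
      rank (vMap (uMap (bMap q))) < rank p ∧
        rank (vMap (uMap (bMap (vMap (uMap (bMap q)))))) < rank p) := by
  simp only [exists_eq_left]
  decide +kernel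

lemma cosetCompatible_gb_of_mem_seeds {p : Point} (hp : p ∈ seeds) :
    CosetCompatible PiGrp rep p gb := by
  simp only [seeds, List.mem_cons, List.not_mem_nil, or_false] at hp
  obtain rfl | rfl | rfl | rfl | rfl := hp
  · apply cosetCompatible_gb_of_rep_eq
    rw [(by decide : bMap ⟨0, north, 0, 0⟩ = ⟨1, north, 0, 0⟩)]
    simp [rep, kRep, vertexRep]
  · apply cosetCompatible_gb_of_rep_eq
    rw [(by decide : bMap ⟨1, north, 0, 0⟩ = ⟨2, north, 0, 0⟩)]
    simp [rep, kRep, vertexRep, sq]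
  · exact cosetCompatible_gb_of_a1
  · exact cosetCompatible_gb_of_a2
  · exact cosetCompatible_gb_of_a3

lemma cosetCompatible_gb (p : Point) : CosetCompatible PiGrp rep p gb := by
  induction hn : rank p using Nat.strong_induction_on generalizing p with
  | _ n ih =>
    subst hn
    replace ih (q : Point) (hq : rank q < rank p) : CosetCompatible PiGrp rep q gb := ih _ hq q rfl
    obtain ⟨d, q, hq, hrank⟩ := exists_mem_seeds_or_rank_lt p
    suffices h : CosetCompatible PiGrp rep q gb by
      have hp : q <• gv ^ (p.vExp - d).val = p := by rw [smul_gv_pow, hq]; simp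
      exact hp ▸ cosetCompatible_gb_smul_gv_pow h _
    rcases hrank with h | h | ⟨h, h'⟩ | ⟨h, h'⟩
    · exact cosetCompatible_gb_of_mem_seeds h
    · rw [← cosetCompatible_mul_iff gj_mem_Kgp]
      refine .of_sq (bj_sq ▸ cosetCompatible_of_mem_Kgp gv_mem_Kgp q) ?_
      rw [cosetCompatible_mul_iff gj_mem_Kgp, op_smul_mul, smul_gb, smul_gj]
      exact ih _ h
    · refine .of_pow_three gb_pow_three ?_ ?_ <;> simp only [smul_gb]
      exacts [ih _ h, ih _ h']
    · rw [← cosetCompatible_mul_iff gu_mem_Kgp, ← cosetCompatible_mul_iff gv_mem_Kgp]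
      refine .of_pow_three buv_pow_three ?_ ?_ <;>
        simp only [cosetCompatible_mul_iff gu_mem_Kgp, cosetCompatible_mul_iff gv_mem_Kgp,
          op_smul_mul, smul_gb, smul_gu, smul_gv]
      exacts [ih _ h, ih _ h']

theorem PiGrp_eq_stabilizer_origin : PiGrp = (MulAction.stabilizer CSᵐᵒᵖ origin).unop := by
  refine CosetCompatible.eq_unop_stabilizer rep_origin PiGrp_le_stabilizer_origin fun g => ?_
  refine CosetCompatible.of_mem_closure (S := Set.range PresentedGroup.of) ?_ ?_ origin
  · rintro _ ⟨_ | _ | _, rfl⟩ p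
    exacts [cosetCompatible_of_mem_Kgp gu_mem_Kgp p, cosetCompatible_of_mem_Kgp gv_mem_Kgp p,
      cosetCompatible_gb p]
  · rw [PresentedGroup.closure_range_of]
    exact Subgroup.mem_top g

end Stabilizer

/-! ### Double cosets -/

section DoubleCosets

open Point

lemma G0_eq_closure : G0 = Subgroup.closure {gb, gj, gv} := by
  refine le_antisymm ((Subgroup.closure_le _).2 ?_) (Subgroup.closure_mono (Set.subset_insert _ _))
  have hb : gb ∈ Subgroup.closure {gb, gj, gv} := Subgroup.subset_closure (.inl rfl)
  have hj : gj ∈ Subgroup.closure {gb, gj, gv} := Subgroup.subset_closure (.inr (.inl rfl))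
  have hv : gv ∈ Subgroup.closure {gb, gj, gv} := Subgroup.subset_closure (.inr (.inr rfl))
  rintro g (rfl | rfl | rfl | rfl)
  exacts [inv_mem (mul_mem hj hb), hb, hj, hv]

lemma commute_gv_of_mem_G0 {g : CS} (hg : g ∈ G0) : Commute gv g := by
  have hG0 : G0 ≤ Subgroup.centralizer {gv} := by
    rw [G0_eq_closure, Subgroup.closure_le]
    rintro g (rfl | rfl | rfl) <;> refine Subgroup.mem_centralizer_singleton_iff.2 ?_
    exacts [commute_gv_gb.eq.symm, commute_gj_gv.eq, rfl]
  exact (Subgroup.mem_centralizer_singleton_iff.1 (hG0 hg)).symm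

lemma eq_north_of_commute_gv_vertexRep {x : Vertex} (h : Commute gv (vertexRep x)) :
    x = north := by
  have h_smul : origin <• (gv * vertexRep x) = origin <• (vertexRep x * gv) := by rw [h.eq]
  clear h
  revert h_smul
  cases x with
  | north => exact fun _ => rfl
  | equator m =>
    simp only [vertexRep, op_smul_mul, smul_gv, smul_gv_pow, smul_gu]
    decide +revert
  | south =>
    simp only [vertexRep, op_smul_mul, smul_gv, smul_gv_pow, smul_gu]
    decide

lemma vertex_eq_north_of_commute_gv_kRep {p : Point} (h : Commute gv p.kRep) :
    p.vertex = north := by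
  rw [kRep, mul_assoc] at h
  have hjv : Commute gv (gj ^ p.jExp.val * gv ^ p.vExp.val) :=
    (commute_gj_gv.symm.pow_right _).mul_right ((Commute.refl gv).pow_right _)
  refine eq_north_of_commute_gv_vertexRep ?_
  simpa only [mul_inv_cancel_right] using h.mul_right hjv.inv_right

lemma kRep_origin_smul {k : CS} (hk : k ∈ Kgp) : (origin <• k).kRep = k := by
  have h := rep_smul_of_mem_Kgp hk origin
  rw [rep_origin, one_mul, rep, sheet_smul_of_mem_Kgp hk] at h
  simpa [origin] using h

theorem Kgp_inf_G0_eq_closure : Kgp ⊓ G0 = Subgroup.closure {gj, gv} := by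
  refine le_antisymm ?_ ((Subgroup.closure_le _).2 ?_)
  · rintro k ⟨hkK, hkG0⟩
    have hk := kRep_origin_smul hkK
    have h_north : (origin <• k).vertex = north :=
      vertex_eq_north_of_commute_gv_kRep (hk.symm ▸ commute_gv_of_mem_G0 hkG0)
    rw [← hk, kRep, h_north, vertexRep, one_mul]
    exact mul_mem (pow_mem (Subgroup.subset_closure (.inl rfl)) _)
      (pow_mem (Subgroup.subset_closure (.inr rfl)) _)
  · rintro k (rfl | rfl)
    exacts [⟨gj_mem_Kgp, G0_mem_j⟩, ⟨gv_mem_Kgp, G0_mem_v⟩]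

/-- The sheet and the vertex of a point: these determine its orbit under `K₀ = ⟨j, v⟩`. -/
def Point.cell (p : Point) : Fin 3 × Vertex := (p.sheet, p.vertex)

lemma exists_mem_Kgp_inf_G0_smul_eq_iff {p q : Point} :
    (∃ k ∈ Kgp ⊓ G0, p <• k = q) ↔ p.cell = q.cell := by
  rw [Kgp_inf_G0_eq_closure]
  constructor
  · rintro ⟨k, hk, rfl⟩
    refine (apply_smul_eq_of_mem_closure (f := cell) ?_ hk p).symm
    rintro k (rfl | rfl) p
    · rw [smul_gj, cell, cell]
    · rw [smul_gv, vMap, cell, cell]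
  · intro h
    obtain ⟨e, x, a, d⟩ := p
    obtain ⟨e', x', a', d'⟩ := q
    obtain ⟨rfl, rfl⟩ := Prod.mk.inj h
    refine ⟨gj ^ (a' - a).val * gv ^ (d' - d).val, mul_mem
      (pow_mem (Subgroup.subset_closure (.inl rfl)) _)
      (pow_mem (Subgroup.subset_closure (.inr rfl)) _), ?_⟩
    rw [op_smul_mul, smul_gj_pow, smul_gv_pow]
    simp

lemma doset_eq_doubleCoset (γ : CS) (H K : Subgroup CS) :
    doset γ H K = DoubleCoset.doubleCoset γ H K := by
  ext g
  rw [DoubleCoset.mem_doubleCoset]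
  rfl

lemma mem_doset_PiGrp_Kgp_iff {γ g : CS} :
    g ∈ doset γ PiGrp Kgp ↔ (origin <• γ).sheet = (origin <• g).sheet := by
  have h := mem_doubleCoset_stabilizer_inf_iff (x := origin) (g := g)
    (le_top : Kgp ≤ ⊤) (Subgroup.mem_top γ)
  rwa [inf_top_eq, ← PiGrp_eq_stabilizer_origin, ← doset_eq_doubleCoset,
    exists_mem_Kgp_smul_eq_iff, and_iff_right (Subgroup.mem_top g)] at h

lemma mem_doset_inf_G0_iff {γ g : CS} (hγ : γ ∈ G0) :
    g ∈ doset γ (PiGrp ⊓ G0) (Kgp ⊓ G0) ↔ g ∈ G0 ∧ (origin <• γ).cell = (origin <• g).cell := by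
  rw [doset_eq_doubleCoset, PiGrp_eq_stabilizer_origin,
    mem_doubleCoset_stabilizer_inf_iff inf_le_right hγ, exists_mem_Kgp_inf_G0_smul_eq_iff]

lemma doset_inf_G0_subset_iff {γ δ : CS} (hγ : γ ∈ G0) :
    doset γ (PiGrp ⊓ G0) (Kgp ⊓ G0) ⊆ doset δ PiGrp Kgp ↔
      (origin <• δ).sheet = (origin <• γ).sheet := by
  constructor
  · intro h
    exact mem_doset_PiGrp_Kgp_iff.1 (h ((mem_doset_inf_G0_iff hγ).2 ⟨hγ, rfl⟩))
  · intro h g hg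
    rw [mem_doset_PiGrp_Kgp_iff, h]
    exact congrArg Prod.fst ((mem_doset_inf_G0_iff hγ).1 hg).2

lemma disjoint_doset_inf_G0 {γ δ : CS} (hγ : γ ∈ G0) (hδ : δ ∈ G0)
    (h : (origin <• γ).cell ≠ (origin <• δ).cell) :
    Disjoint (doset γ (PiGrp ⊓ G0) (Kgp ⊓ G0)) (doset δ (PiGrp ⊓ G0) (Kgp ⊓ G0)) := by
  rw [Set.disjoint_left]
  intro g hg hg'
  rw [mem_doset_inf_G0_iff hγ] at hg
  rw [mem_doset_inf_G0_iff hδ] at hg'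
  exact h (hg.2.trans hg'.2.symm)

/-- The cells of the points in the orbit of the origin under `G₀`. -/
def mirrorCell : Fin 6 → Fin 3 × Vertex :=
  ![(0, north), (0, equator 1), (0, equator 0), (1, north), (2, north), (2, south)]

/-- Representatives of the double cosets `Π₀γK₀` in `G₀`, one for each cell in `mirrorCell`. -/
def mirrorRep : Fin 6 → CS :=
  ![1, gj * gb⁻¹, gb⁻¹ * gj * gb⁻¹, gb, gb⁻¹, gb * gj * gb⁻¹]

lemma mirrorRep_mem_G0 (i : Fin 6) : mirrorRep i ∈ G0 := by
  have hb := G0_mem_b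
  have hb' := inv_mem hb
  have hj := G0_mem_j
  fin_cases i
  exacts [one_mem _, mul_mem hj hb', mul_mem (mul_mem hb' hj) hb', hb, hb',
    mul_mem (mul_mem hb hj) hb']

lemma cell_origin_smul_mirrorRep (i : Fin 6) : (origin <• mirrorRep i).cell = mirrorCell i := by
  fin_cases i <;>
    simp only [mirrorRep, op_smul_mul, smul_gj, smul_gb, smul_gb_inv, MulOpposite.op_one, one_smul,
      Fin.zero_eta, Fin.mk_one, Fin.reduceFinMk, Matrix.cons_val] <;>
    decide

lemma mirrorCell_injective : Function.Injective mirrorCell := by decide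

lemma mirrorRep_injective : Function.Injective mirrorRep := fun i j h =>
  mirrorCell_injective <| by
    rw [← cell_origin_smul_mirrorRep, ← cell_origin_smul_mirrorRep, h]

lemma cell_bMap_mem_range_mirrorCell_iff :
    ∀ p, (∃ i, mirrorCell i = (bMap p).cell) ↔ ∃ i, mirrorCell i = p.cell := by
  decide +kernel

lemma exists_mirrorCell_eq {g : CS} (hg : g ∈ G0) : ∃ i, mirrorCell i = (origin <• g).cell := by
  rw [G0_eq_closure] at hg
  have h_orbit := apply_smul_eq_of_mem_closure (f := fun p : Point => ∃ i, mirrorCell i = p.cell)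
    ?_ hg origin
  · exact h_orbit ▸ ⟨0, rfl⟩
  · rintro g (rfl | rfl | rfl) p
    · simp only [smul_gb, cell_bMap_mem_range_mirrorCell_iff]
    · simp only [smul_gj, cell]
    · simp only [smul_gv, vMap, cell]

lemma iUnion_doset_mirrorRep : ⋃ i, doset (mirrorRep i) (PiGrp ⊓ G0) (Kgp ⊓ G0) = G0 := by
  ext g
  simp only [Set.mem_iUnion, mem_doset_inf_G0_iff (mirrorRep_mem_G0 _), cell_origin_smul_mirrorRep,
    exists_and_left, SetLike.mem_coe]
  exact and_iff_left_of_imp exists_mirrorCell_eq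

/-- The values of `mirrorRep`. -/
def mirrorReps : Finset CS := Finset.univ.map ⟨mirrorRep, mirrorRep_injective⟩

lemma mem_mirrorReps {γ : CS} : γ ∈ mirrorReps ↔ ∃ i, mirrorRep i = γ := by
  simp [mirrorReps]

lemma natCard_doset_subset (δ : CS) :
    Nat.card {γ // γ ∈ mirrorReps ∧ doset γ (PiGrp ⊓ G0) (Kgp ⊓ G0) ⊆ doset δ PiGrp Kgp} =
      Fintype.card {i // (origin <• δ).sheet = (mirrorCell i).1} := by
  rw [mirrorReps, natCard_mem_map_and, ← Nat.card_eq_fintype_card]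
  simp only [Function.Embedding.coeFn_mk, doset_inf_G0_subset_iff (mirrorRep_mem_G0 _),
    ← cell_origin_smul_mirrorRep, cell]

end DoubleCosets

end CartwrightSteger

open CartwrightSteger

/-- with `Π₀ = Π ∩ G₀` and `K₀ = K ∩ G₀`, the group `G₀` is the union
of exactly 6 pairwise disjoint double cosets `Π₀γK₀` with `γ ∈ G₀`; of these,
exactly 3 are contained in `ΠK`, exactly 1 in `ΠbK`, and exactly 2 in `Πb⁻¹K`. -/
theorem stmt_19 :
    ∃ S : Finset CS, S.card = 6 ∧ (∀ γ ∈ S, γ ∈ G0) ∧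
      (S : Set CS).PairwiseDisjoint (fun γ => doset γ (PiGrp ⊓ G0) (Kgp ⊓ G0)) ∧
      (⋃ γ ∈ S, doset γ (PiGrp ⊓ G0) (Kgp ⊓ G0)) = (G0 : Set CS) ∧
      Nat.card {γ : CS // γ ∈ S ∧ doset γ (PiGrp ⊓ G0) (Kgp ⊓ G0) ⊆ doset 1 PiGrp Kgp} = 3 ∧
      Nat.card {γ : CS // γ ∈ S ∧ doset γ (PiGrp ⊓ G0) (Kgp ⊓ G0) ⊆ doset gb PiGrp Kgp} = 1 ∧
      Nat.card {γ : CS // γ ∈ S ∧ doset γ (PiGrp ⊓ G0) (Kgp ⊓ G0) ⊆ doset gb⁻¹ PiGrp Kgp} = 2 := by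
  refine ⟨mirrorReps, by simp [mirrorReps], ?_, ?_, ?_, ?_, ?_, ?_⟩
  · simp only [mem_mirrorReps, forall_exists_index, forall_apply_eq_imp_iff]
    exact mirrorRep_mem_G0
  · intro γ hγ δ hδ hne
    obtain ⟨i, rfl⟩ := mem_mirrorReps.1 hγ
    obtain ⟨j, rfl⟩ := mem_mirrorReps.1 hδ
    refine disjoint_doset_inf_G0 (mirrorRep_mem_G0 i) (mirrorRep_mem_G0 j) ?_
    rw [cell_origin_smul_mirrorRep, cell_origin_smul_mirrorRep]
    exact mirrorCell_injective.ne (ne_of_apply_ne mirrorRep hne)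
  · simp only [mem_mirrorReps, Set.iUnion_exists, Set.iUnion_iUnion_eq', iUnion_doset_mirrorRep]
  · rw [natCard_doset_subset, MulOpposite.op_one, one_smul]
    decide
  · rw [natCard_doset_subset, smul_gb]
    decide
  · rw [natCard_doset_subset, smul_gb_inv]
    decide
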